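/- arXiv:1609.06272 — 3 statements merged into one kernel-verified Lean document; each statement's English description precedes it below -/
import Mathlib

section
/- Let H be a complex Hilbert space, let χ and γ be bounded self-adjoint operators on H with 0 ≤ χ ≤ 1 and 0 ≤ γ, and let p ∈ [1/2, 1]. Then χ γ^p χ ≤ (χ γ χ)^p in the Loewner order. -/
section Helpers

variable {A : Type*} [CStarAlgebra A] [PartialOrder A] [StarOrderedRing A]

/-- Intertwining passes to the continuous functional calculus. -/
lemma semiconj_cfc_aux (y a b : A) (ha : 0 ≤ a) (hb : 0 ≤ b) (h : y * a = b * y)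
    (f : ℝ → ℝ) (hf : ContinuousOn f (Set.Ici 0)) : y * cfc f a = cfc f b * y := by
  have hasa : IsSelfAdjoint a := ha.isSelfAdjoint
  have hbsa : IsSelfAdjoint b := hb.isSelfAdjoint
  set M : ℝ := max ‖a‖ ‖b‖ with hM
  have hspec : ∀ c : A, 0 ≤ c → ‖c‖ ≤ max ‖a‖ ‖b‖ → ∀ x ∈ spectrum ℝ c, x ∈ Set.Icc 0 M := by
    intro c hc hcM x hx
    refine ⟨spectrum_nonneg_of_nonneg hc hx, ?_⟩
    have h1 : ‖x‖ ≤ ‖c‖ := by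
      rcases subsingleton_or_nontrivial A with hA | hA
      · rw [spectrum.of_subsingleton] at hx
        exact absurd hx (Set.notMem_empty x)
      exact spectrum.norm_le_norm_of_mem hx
    have h2 : x ≤ ‖x‖ := Real.le_norm_self x
    linarith
  have hsa := hspec a ha (le_max_left _ _)
  have hsb := hspec b hb (le_max_right _ _)
  have hfa : ContinuousOn f (spectrum ℝ a) := hf.mono fun x hx => (hsa x hx).1
  have hfb : ContinuousOn f (spectrum ℝ b) := hf.mono fun x hx => (hsb x hx).1
  have hpoly : ∀ q : Polynomial ℝ, y * Polynomial.aeval a q = Polynomial.aeval b q * y := by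
    intro q
    induction q using Polynomial.induction_on with
    | C r => simp [Algebra.commutes]
    | add p q hp hq => simp [mul_add, add_mul, hp, hq]
    | monomial n r ih =>
      have : ∀ n : ℕ, y * a ^ n = b ^ n * y := by
        intro n
        have h' : SemiconjBy y a b := h
        exact (h'.pow_right n)
      simp only [map_mul, map_pow, Polynomial.aeval_C, Polynomial.aeval_X]
      rw [← mul_assoc, ← Algebra.commutes, mul_assoc, this, ← mul_assoc]
  rw [← sub_eq_zero, ← norm_le_zero_iff]
  refine le_of_forall_pos_le_add fun ε hε => ?_
  obtain ⟨q, hq⟩ := exists_polynomial_near_of_continuousOn 0 M f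
    (hf.mono fun x hx => hx.1) (ε / (2 * (‖y‖ + 1))) (by positivity)
  have hna : ‖Polynomial.aeval a q - cfc f a‖ ≤ ε / (2 * (‖y‖ + 1)) := by
    rw [← cfc_polynomial q a, ← cfc_sub q.eval f a q.continuous.continuousOn hfa]
    exact norm_cfc_le (by positivity) fun x hx => (hq x (hsa x hx)).le
  have hnb : ‖Polynomial.aeval b q - cfc f b‖ ≤ ε / (2 * (‖y‖ + 1)) := by
    rw [← cfc_polynomial q b, ← cfc_sub q.eval f b q.continuous.continuousOn hfb]
    exact norm_cfc_le (by positivity) fun x hx => (hq x (hsb x hx)).le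
  have heq : y * cfc f a - cfc f b * y =
      (Polynomial.aeval b q - cfc f b) * y - y * (Polynomial.aeval a q - cfc f a) := by
    rw [sub_mul, mul_sub, hpoly]; abel
  rw [heq]
  set d := ε / (2 * (‖y‖ + 1)) with hd
  have hdε : d * (2 * (‖y‖ + 1)) = ε := by
    rw [hd]; field_simp
  have hd0 : 0 < d := by positivity
  have hy := norm_nonneg y
  calc _ ≤ ‖(Polynomial.aeval b q - cfc f b) * y‖ + ‖y * (Polynomial.aeval a q - cfc f a)‖ :=
        norm_sub_le _ _
    _ ≤ d * ‖y‖ + ‖y‖ * d := by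
        gcongr
        · exact (norm_mul_le _ _).trans (by gcongr)
        · exact (norm_mul_le _ _).trans (by gcongr)
    _ ≤ 0 + ε := by nlinarith

/-- Negative powers in `[-1, 0]` are operator antitone. -/
lemma rpow_anti_aux {a b : A} (ha : IsStrictlyPositive a) (hab : a ≤ b) {r : ℝ}
    (hr : r ∈ Set.Icc (-1 : ℝ) 0) : b ^ r ≤ a ^ r := by
  have hb : IsStrictlyPositive b := IsStrictlyPositive.of_le ha hab
  have h := CFC.rpow_le_rpow (p := -r) ⟨by linarith [hr.2], by linarith [hr.1]⟩
    (CStarAlgebra.rpow_neg_one_le_rpow_neg_one hab ha)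
  rw [CFC.rpow_rpow b _ _ (by norm_num) hb, CFC.rpow_rpow a _ _ (by norm_num) ha] at h
  simpa using h

lemma shift_continuousOn_aux {δ : ℝ} (hδ : 0 < δ) (r : ℝ) :
    ContinuousOn (fun x : ℝ => (x + δ) ^ r) (Set.Ici 0) := by
  refine ContinuousOn.rpow_const (by fun_prop) fun x hx => Or.inl ?_
  have : (0 : ℝ) ≤ x := hx
  positivity

lemma cfc_shift_aux {a : A} (ha : 0 ≤ a) {δ : ℝ} (hδ : 0 < δ) (r : ℝ) :
    cfc (fun x : ℝ => (x + δ) ^ r) a = (a + algebraMap ℝ A δ) ^ r := by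
  have hasa : IsSelfAdjoint a := ha.isSelfAdjoint
  rw [← CFC.cfc_rpow (f := fun x : ℝ => x + δ) (a := a) (y := r)
    (fun x hx => by have := spectrum_nonneg_of_nonneg ha hx; positivity)]
  rw [cfc_add_const δ (fun x => x) a, cfc_id' ℝ a]

lemma cfc_shift_anti_aux {a b : A} (ha : 0 ≤ a) (hab : a ≤ b) {δ : ℝ} (hδ : 0 < δ) {r : ℝ}
    (hr : r ∈ Set.Icc (-1 : ℝ) 0) :
    cfc (fun x : ℝ => (x + δ) ^ r) b ≤ cfc (fun x : ℝ => (x + δ) ^ r) a := by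
  rw [cfc_shift_aux ha hδ, cfc_shift_aux (ha.trans hab) hδ]
  refine rpow_anti_aux ?_ (by gcongr) hr
  grind

lemma conj_step_aux {c g : A} (hc : IsSelfAdjoint c) (hc1 : c * c ≤ 1) (hg : 0 ≤ g)
    {δ : ℝ} (hδ : 0 < δ) {r : ℝ} (hr : r ∈ Set.Icc (-1 : ℝ) 0) :
    c * (cfc (fun x : ℝ => (x + δ) ^ r) g * g) * c ≤
      cfc (fun x : ℝ => (x + δ) ^ r) (c * g * c) * (c * g * c) := by
  set f : ℝ → ℝ := fun x : ℝ => (x + δ) ^ r with hf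
  have hfc : ContinuousOn f (Set.Ici 0) := shift_continuousOn_aux hδ r
  obtain ⟨s, hs, hsg⟩ : ∃ s : A, IsSelfAdjoint s ∧ s * s = g :=
    ⟨CFC.sqrt g, (CFC.sqrt_nonneg g).isSelfAdjoint, CFC.sqrt_mul_sqrt_self g hg⟩
  have hm : 0 ≤ c * g * c := hc.conjugate_nonneg hg
  have hcc : 0 ≤ c * c := by simpa [hc.star_eq] using star_mul_self_nonneg c
  have hb : 0 ≤ s * (c * c) * s := hs.conjugate_nonneg hcc
  have hbg : s * (c * c) * s ≤ g := by
    have := hs.conjugate_le_conjugate hc1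
    simpa [hsg] using this
  have h1 : s * cfc f g = cfc f g * s :=
    semiconj_cfc_aux s g g hg hg (by rw [← hsg, mul_assoc]) f hfc
  have h2 : (c * s) * cfc f (s * (c * c) * s) = cfc f (c * g * c) * (c * s) :=
    semiconj_cfc_aux (c * s) _ _ hb hm (by rw [← hsg]; simp only [mul_assoc]) f hfc
  have h3 := star_right_conjugate_le_conjugate (cfc_shift_anti_aux hb hbg hδ hr) (c * s)
  rw [star_mul, hs.star_eq, hc.star_eq] at h3
  change c * s * cfc f g * (s * c) ≤ c * s * cfc f (s * (c * c) * s) * (s * c) at h3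
  have e1 : c * (cfc f g * g) * c = c * s * cfc f g * (s * c) := by
    rw [mul_assoc c s, h1, ← hsg]; simp only [mul_assoc]
  have e2 : cfc f (c * g * c) * (c * g * c) = c * s * cfc f (s * (c * c) * s) * (s * c) := by
    rw [h2]; conv_lhs => rw [← hsg]
    rw [hsg]; simp only [← hsg, mul_assoc]
  rw [e1, e2]; exact h3

lemma scalar_upper_aux {p δ x : ℝ} (hp1 : p ≤ 1) (hp : 0 < p) (hδ : 0 < δ) (hx : 0 ≤ x) :
    (x + δ) ^ (p - 1) * x ≤ x ^ p := by
  rcases hx.eq_or_lt with rfl | hx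
  · simp [Real.zero_rpow hp.ne']
  · have : (x + δ) ^ (p - 1) ≤ x ^ (p - 1) :=
      Real.rpow_le_rpow_of_nonpos hx (by linarith) (by linarith)
    calc _ ≤ x ^ (p - 1) * x := by gcongr
      _ = x ^ p := by rw [Real.rpow_sub_one hx.ne']; field_simp

lemma scalar_lower_aux {p δ x : ℝ} (hp1 : p ≤ 1) (hp : 0 < p) (hδ : 0 < δ) (hx : 0 ≤ x) :
    x ^ p ≤ (x + δ) ^ (p - 1) * x + δ ^ p := by
  have h1 : x ^ p ≤ (x + δ) ^ p := Real.rpow_le_rpow hx (by linarith) hp.le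
  have h2 : (x + δ) ^ p = (x + δ) ^ (p - 1) * (x + δ) := by
    rw [Real.rpow_sub_one (by positivity)]; field_simp
  have h3 : (x + δ) ^ (p - 1) ≤ δ ^ (p - 1) :=
    Real.rpow_le_rpow_of_nonpos hδ (by linarith) (by linarith)
  have h4 : δ ^ p = δ ^ (p - 1) * δ := by
    rw [Real.rpow_sub_one (by positivity)]; field_simp
  nlinarith

lemma cfc_mul_id_aux {a : A} (ha : 0 ≤ a) {f : ℝ → ℝ} (hf : ContinuousOn f (Set.Ici 0)) :
    cfc f a * a = cfc (fun x => f x * x) a := by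
  have hasa : IsSelfAdjoint a := ha.isSelfAdjoint
  have hfa : ContinuousOn f (spectrum ℝ a) :=
    hf.mono fun x hx => spectrum_nonneg_of_nonneg ha hx
  rw [cfc_mul f (fun x => x) a hfa (by fun_prop), cfc_id' ℝ a]

/-- Hansen's inequality for powers. -/
lemma hansen_aux {c g : A} (hc : IsSelfAdjoint c) (hc1 : c * c ≤ 1) (hg : 0 ≤ g)
    {p : ℝ} (hp : 0 < p) (hp1 : p ≤ 1) :
    c * cfc (fun x : ℝ => x ^ p) g * c ≤ cfc (fun x : ℝ => x ^ p) (c * g * c) := by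
  have hm : 0 ≤ c * g * c := hc.conjugate_nonneg hg
  have hgsa : IsSelfAdjoint g := hg.isSelfAdjoint
  have hpc : Continuous (fun x : ℝ => x ^ p) := Real.continuous_rpow_const hp.le
  have key : ∀ δ : ℝ, 0 < δ → c * cfc (fun x : ℝ => x ^ p) g * c ≤
      cfc (fun x : ℝ => x ^ p) (c * g * c) + algebraMap ℝ A (δ ^ p) := by
    intro δ hδ
    have hfc := shift_continuousOn_aux hδ (p - 1)
    have hfc' : ContinuousOn (fun x : ℝ => (x + δ) ^ (p - 1) * x) (Set.Ici 0) :=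
      hfc.mul continuousOn_id
    have hcg : ContinuousOn (fun x : ℝ => (x + δ) ^ (p - 1) * x) (spectrum ℝ g) :=
      hfc'.mono fun x hx => spectrum_nonneg_of_nonneg hg hx
    have hcm : ContinuousOn (fun x : ℝ => (x + δ) ^ (p - 1) * x) (spectrum ℝ (c * g * c)) :=
      hfc'.mono fun x hx => spectrum_nonneg_of_nonneg hm hx
    have hstep := conj_step_aux hc hc1 hg hδ (r := p - 1) ⟨by linarith, by linarith⟩
    rw [cfc_mul_id_aux hg hfc, cfc_mul_id_aux hm hfc] at hstep
    have hu : cfc (fun x : ℝ => (x + δ) ^ (p - 1) * x) (c * g * c) ≤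
        cfc (fun x : ℝ => x ^ p) (c * g * c) :=
      cfc_mono (fun x hx => scalar_upper_aux hp1 hp hδ (spectrum_nonneg_of_nonneg hm hx))
        hcm hpc.continuousOn
    have hl : cfc (fun x : ℝ => x ^ p) g ≤
        cfc (fun x : ℝ => (x + δ) ^ (p - 1) * x) g + algebraMap ℝ A (δ ^ p) := by
      rw [← cfc_add_const (δ ^ p) (fun x : ℝ => (x + δ) ^ (p - 1) * x) g hcg]
      exact cfc_mono (fun x hx => scalar_lower_aux hp1 hp hδ (spectrum_nonneg_of_nonneg hg hx))
        hpc.continuousOn (hcg.add continuousOn_const)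
    have hl' := hc.conjugate_le_conjugate hl
    have hδp : 0 ≤ δ ^ p := by positivity
    have h5 : c * algebraMap ℝ A (δ ^ p) * c ≤ algebraMap ℝ A (δ ^ p) := by
      rw [← Algebra.commutes, mul_assoc, ← Algebra.smul_def, Algebra.algebraMap_eq_smul_one]
      exact smul_le_smul_of_nonneg_left hc1 hδp
    rw [mul_add, add_mul] at hl'
    exact hl'.trans (add_le_add (hstep.trans hu) h5)
  have hlim : Filter.Tendsto (fun δ : ℝ => cfc (fun x : ℝ => x ^ p) (c * g * c) +
      algebraMap ℝ A (δ ^ p)) (nhdsWithin 0 (Set.Ioi 0))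
      (nhds (cfc (fun x : ℝ => x ^ p) (c * g * c))) := by
    have hcont : Continuous (fun δ : ℝ => cfc (fun x : ℝ => x ^ p) (c * g * c) +
        algebraMap ℝ A (δ ^ p)) :=
      continuous_const.add ((algebraMapCLM ℝ A).continuous.comp hpc)
    have := (hcont.tendsto 0).mono_left (nhdsWithin_le_nhds (s := Set.Ioi 0))
    simpa [Real.zero_rpow hp.ne'] using this
  refine ge_of_tendsto hlim ?_
  filter_upwards [self_mem_nhdsWithin] with δ hδ using key δ hδ

end Helpers


/-- **Loewner order inequality for fractional powers, `p ∈ [1/2, 1]`.**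
If `χ, γ` are bounded self-adjoint operators on a complex Hilbert space `H` with
`0 ≤ χ ≤ 1` and `0 ≤ γ` (Loewner order), and `p ∈ [1/2, 1]`, then
`χ γ^p χ ≤ (χ γ χ)^p`, where powers are taken via the continuous functional calculus. -/
theorem chi_pow_chi_le {H : Type*} [NormedAddCommGroup H] [InnerProductSpace ℂ H]
    [CompleteSpace H] (χ γ : H →L[ℂ] H)
    (hχsa : IsSelfAdjoint χ) (hγsa : IsSelfAdjoint γ)
    (hχ0 : (0 : H →L[ℂ] H) ≤ χ) (hχ1 : χ ≤ 1) (hγ0 : (0 : H →L[ℂ] H) ≤ γ)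
    (p : ℝ) (hp : p ∈ Set.Icc (1 / 2 : ℝ) 1) :
    χ * cfc (fun x : ℝ => x ^ p) γ * χ ≤ cfc (fun x : ℝ => x ^ p) (χ * γ * χ) := by
  have h0p : 0 < p := by linarith [hp.1]
  have hc1 : χ * χ ≤ 1 := by
    have h := (CStarAlgebra.norm_le_one_iff_of_nonneg χ hχ0).2 hχ1
    have h2 : ‖χ * χ‖ ≤ 1 := (norm_mul_le _ _).trans (by nlinarith [norm_nonneg χ])
    have h3 : 0 ≤ χ * χ := by simpa [hχsa.star_eq] using star_mul_self_nonneg χ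
    exact (CStarAlgebra.norm_le_one_iff_of_nonneg _ h3).1 h2
  exact hansen_aux hχsa hc1 hγ0 h0p hp.2
end

section
/- (Newton's theorem, sphere average form.) For every r > 0 and every y ∈ ℝ³, (1/(4π)) ∫_{S²} |rν − y|^{-1} dσ(ν) = 1/max(r, |y|), where σ is the surface measure on the unit sphere S² ⊂ ℝ³ (with total mass 4π). -/
open MeasureTheory
open Set
open scoped Pointwise

lemma integral_phi (r s : ℝ) (hr : 0 < r) (hs : 0 < s) :
    ∫ t in (-1:ℝ)..1, (Real.sqrt (r^2 + s^2 - 2*r*s*t))⁻¹ = 2 / max r s := by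
  have hcont : ContinuousOn (fun t : ℝ => -(Real.sqrt (r^2 + s^2 - 2*r*s*t)) / (r*s)) (Icc (-1) 1) := by
    fun_prop
  have hrs : 0 < r * s := mul_pos hr hs
  have hd : ∀ t ∈ Ioo (-1:ℝ) 1, HasDerivAt (fun t : ℝ => -(Real.sqrt (r^2 + s^2 - 2*r*s*t)) / (r*s))
      ((Real.sqrt (r^2 + s^2 - 2*r*s*t))⁻¹) t := by
    intro t ht
    have hpos : 0 < r^2 + s^2 - 2*r*s*t := by
      nlinarith [sq_nonneg (r - s), mul_pos hrs (sub_pos.2 ht.2)]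
    have h1 : HasDerivAt (fun t : ℝ => r^2 + s^2 - 2*r*s*t) (-(2*r*s)) t := by
      simpa using ((hasDerivAt_id t).const_mul (2*r*s)).const_sub (r^2+s^2)
    convert! ((h1.sqrt hpos.ne').neg).div_const (r*s) using 1
    have := (Real.sqrt_pos.2 hpos).ne'
    field_simp
  rw [intervalIntegral.integral_eq_sub_of_hasDerivAt_of_le (by norm_num) hcont hd]
  · have e1 : r^2 + s^2 - 2*r*s*1 = (r - s)^2 := by ring
    have e2 : r^2 + s^2 - 2*r*s*(-1) = (r + s)^2 := by ring
    rw [e1, e2, Real.sqrt_sq_eq_abs, Real.sqrt_sq_eq_abs, abs_of_pos (add_pos hr hs)]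
    rcases le_total r s with h | h
    · rw [max_eq_right h, abs_of_nonpos (by linarith)]
      field_simp; ring
    · rw [max_eq_left h, abs_of_nonneg (by linarith)]
      field_simp; ring
  · apply intervalIntegral.intervalIntegrable_deriv_of_nonneg (g := fun t : ℝ => -(Real.sqrt (r^2 + s^2 - 2*r*s*t)) / (r*s))
    · rwa [uIcc_of_le (by norm_num)]
    · simpa using hd
    · intro t _; positivity

lemma map_normSq :
    MeasurePreserving (fun v : EuclideanSpace ℝ (Fin 2) => ‖v‖^2) volume
      (ENNReal.ofReal Real.pi • (volume : Measure ℝ).restrict (Ici 0)) := by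
  have hm : Measurable (fun v : EuclideanSpace ℝ (Fin 2) => ‖v‖^2) := by fun_prop
  refine ⟨hm, ?_⟩
  have key : ∀ b : ℝ, volume {v : EuclideanSpace ℝ (Fin 2) | ‖v‖^2 < b} = ENNReal.ofReal Real.pi * ENNReal.ofReal b := by
    intro b
    have : {v : EuclideanSpace ℝ (Fin 2) | ‖v‖^2 < b} = Metric.ball 0 (Real.sqrt b) := by
      ext v; simp [Real.lt_sqrt]
    rw [this, EuclideanSpace.volume_ball_fin_two, ← ENNReal.ofReal_pow (Real.sqrt_nonneg b), mul_comm]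
    congr 1
    rcases le_total 0 b with h | h
    · rw [Real.sq_sqrt h]
    · rw [Real.sqrt_eq_zero_of_nonpos h, ENNReal.ofReal_of_nonpos h]; simp
  have : IsLocallyFiniteMeasure (ENNReal.ofReal Real.pi • (volume : Measure ℝ).restrict (Ici 0)) := by
    rw [ENNReal.ofReal]; exact inferInstanceAs (IsLocallyFiniteMeasure (Real.pi.toNNReal • (volume : Measure ℝ).restrict (Ici 0)))
  symm
  refine Measure.ext_of_Ico _ _ ?_
  intro a b hab
  rw [Measure.map_apply hm measurableSet_Ico, Measure.smul_apply, Measure.restrict_apply measurableSet_Ico]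
  have h1 : (fun v : EuclideanSpace ℝ (Fin 2) => ‖v‖^2) ⁻¹' (Ico a b) = {v | ‖v‖^2 < b} \ {v | ‖v‖^2 < a} := by
    ext v; simp [and_comm]
  have h2 : Ico a b ∩ Ici 0 = Ico (max a 0) b := by
    ext x; simp only [mem_inter_iff, mem_Ico, mem_Ici, max_le_iff]; tauto
  have hsub : {v : EuclideanSpace ℝ (Fin 2) | ‖v‖^2 < a} ⊆ {v | ‖v‖^2 < b} :=
    fun v hv => lt_trans hv hab
  rw [h1, measure_sdiff hsub (measurableSet_lt hm measurable_const).nullMeasurableSet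
    (by rw [key]; finiteness), key, key, h2, Real.volume_Ico, smul_eq_mul, ← ENNReal.mul_sub (by simp)]
  congr 1
  rcases le_total 0 a with h | h
  · rw [max_eq_left h, ENNReal.ofReal_sub _ h]
  · rw [max_eq_right h, ENNReal.ofReal_of_nonpos h]; simp


lemma mp_Q (e : EuclideanSpace ℝ (Fin 3)) (he : ‖e‖ = 1) :
    MeasurePreserving (fun x : (EuclideanSpace ℝ (Fin 3)) => (inner ℝ e x, ‖x‖^2 - (inner ℝ e x)^2)) volume
      ((volume : Measure ℝ).prod (ENNReal.ofReal Real.pi • (volume : Measure ℝ).restrict (Ici 0))) := by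
  obtain ⟨b, hb⟩ := Orthonormal.exists_orthonormalBasis_extension_of_card_eq (𝕜 := ℝ) (E := (EuclideanSpace ℝ (Fin 3))) (ι := Fin 3)
    (by simp) (v := fun _ => e) (s := {0}) (by
      rw [orthonormal_iff_ite]; rintro ⟨i, hi⟩ ⟨j, hj⟩
      simp at hi hj; subst hi; subst hj; simp [Set.domRestrict, he])
  have hb0 : b 0 = e := hb 0 rfl
  have m1 := b.measurePreserving_repr
  have m2 := PiLp.volume_preserving_ofLp (Fin 3)
  have m3 := volume_preserving_piFinSuccAbove (fun _ : Fin 3 => ℝ) 0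
  have m4 := PiLp.volume_preserving_toLp (Fin 2)
  have m5 := (MeasurePreserving.id (volume : Measure ℝ)).prod (map_normSq.comp m4)
  have m6 := m5.comp (m3.comp (m2.comp m1))
  convert! m6 using 1
  ext x
  · simp [MeasurableEquiv.piFinSuccAbove, b.repr_apply_apply, hb0]
  · have : ‖x‖^2 = ∑ i, (inner ℝ (b i) x)^2 := by
      rw [← b.sum_sq_norm_inner_right x]; simp
    rw [this, Fin.sum_univ_three, hb0]
    simp [MeasurableEquiv.piFinSuccAbove, EuclideanSpace.norm_sq_eq, b.repr_apply_apply, Fin.sum_univ_two, Fin.tail]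
    ring
    
lemma archimedes (e : EuclideanSpace ℝ (Fin 3)) (he : ‖e‖ = 1) :
    Measure.map (fun ν : Metric.sphere (0 : EuclideanSpace ℝ (Fin 3)) 1 => (inner ℝ e (ν : EuclideanSpace ℝ (Fin 3)) : ℝ)) (volume : Measure (EuclideanSpace ℝ (Fin 3))).toSphere
     = ENNReal.ofReal (2 * Real.pi) • (volume : Measure ℝ).restrict (Icc (-1) 1) := by
  have hm : Measurable (fun ν : Metric.sphere (0 : EuclideanSpace ℝ (Fin 3)) 1 => (inner ℝ e (ν : EuclideanSpace ℝ (Fin 3)) : ℝ)) := by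
    fun_prop
  ext A hA
  rw [Measure.map_apply hm hA, Measure.toSphere_apply' _ (hm hA), Measure.smul_apply, Measure.restrict_apply hA]
  -- the set of pairs `(h, s)`
  let S : Set (ℝ × ℝ) := {p | p.2 ∈ Ioo (0:ℝ) 1 ∧ p.1 ^ 2 ≤ p.2 ∧ (Real.sqrt p.2)⁻¹ * p.1 ∈ A}
  have hS : MeasurableSet S := by
    refine (measurable_snd measurableSet_Ioo).inter (MeasurableSet.inter ?_ ?_)
    · exact measurableSet_le (f := fun p : ℝ × ℝ => p.1 ^ 2) (g := fun p : ℝ × ℝ => p.2) (by fun_prop) (by fun_prop)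
    · exact (show Measurable (fun p : ℝ × ℝ => (Real.sqrt p.2)⁻¹ * p.1) by fun_prop) hA
  let T : Set (ℝ × ℝ) := (fun p : ℝ × ℝ => (p.1, p.1^2 + p.2)) ⁻¹' S
  have hT : MeasurableSet T := (show Measurable (fun p : ℝ × ℝ => (p.1, p.1^2 + p.2)) by fun_prop) hS
  have hset : Ioo (0:ℝ) 1 • ((↑) '' ((fun ν : Metric.sphere (0 : EuclideanSpace ℝ (Fin 3)) 1 => (inner ℝ e (ν : EuclideanSpace ℝ (Fin 3)) : ℝ)) ⁻¹' A) : Set (EuclideanSpace ℝ (Fin 3)))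
      = (fun x : (EuclideanSpace ℝ (Fin 3)) => (inner ℝ e x, ‖x‖^2 - (inner ℝ e x)^2)) ⁻¹' T := by
    ext x
    simp only [T, S, mem_preimage, mem_ofPred_eq, add_sub_cancel, Real.sqrt_sq (norm_nonneg x), Set.mem_smul]
    constructor
    · rintro ⟨c, hc, _, ⟨ν, hν, rfl⟩, rfl⟩
      have hn : ‖(ν : EuclideanSpace ℝ (Fin 3))‖ = 1 := by simp
      have hcn : ‖c • (ν : EuclideanSpace ℝ (Fin 3))‖ = c := by rw [norm_smul, hn, Real.norm_of_nonneg hc.1.le, mul_one]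
      have hab := abs_real_inner_le_norm e (c • (ν : EuclideanSpace ℝ (Fin 3)))
      rw [he, one_mul] at hab
      refine ⟨?_, ?_, ?_⟩
      · rw [hcn]; exact ⟨by have := hc.1; positivity, by nlinarith [hc.1, hc.2]⟩
      · exact sq_le_sq.2 (by simpa using hab)
      · rw [hcn, inner_smul_right, inv_mul_cancel_left₀ hc.1.ne']; exact hν
    · rintro ⟨h1, h2, h3⟩
      have hx : 0 < ‖x‖ := by
        rcases (norm_nonneg x).eq_or_lt with h | h
        · rw [← h] at h1; simp at h1
        · exact h
      refine ⟨‖x‖, ⟨hx, by nlinarith [h1.2]⟩, ‖x‖⁻¹ • x, ⟨⟨‖x‖⁻¹ • x, ?_⟩, ?_, rfl⟩, ?_⟩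
      · simp [norm_smul, hx.ne']
      · simpa [inner_smul_right] using h3
      · rw [smul_smul, mul_inv_cancel₀ hx.ne', one_smul]
  rw [hset, (mp_Q e he).measure_preimage hT.nullMeasurableSet, Measure.prod_smul_right, Measure.smul_apply,
    Measure.prod_apply hT]
  have step : ∀ h : ℝ, (volume.restrict (Ici 0)) (Prod.mk h ⁻¹' T) = volume (Prod.mk h ⁻¹' S) := by
    intro h
    rw [Measure.restrict_apply (measurable_prodMk_left hT), ← measure_preimage_add volume (h^2) (Prod.mk h ⁻¹' S)]
    congr 1
    ext w
    simp only [T, S, mem_inter_iff, mem_preimage, mem_ofPred_eq, mem_Ici]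
    constructor
    · rintro ⟨h1, _⟩; exact h1
    · intro h1; exact ⟨h1, by linarith [h1.2.1]⟩
  simp_rw [step]
  rw [← Measure.prod_apply hS, Measure.prod_apply_symm hS]
  have step2 : ∀ s : ℝ, volume ((fun h => (h, s)) ⁻¹' S) =
      (Ioo (0:ℝ) 1).indicator (fun s => ENNReal.ofReal (Real.sqrt s) * volume (A ∩ Icc (-1) 1)) s := by
    intro s
    by_cases hs : s ∈ Ioo (0:ℝ) 1
    · rw [indicator_of_mem hs]
      have hq := Real.sqrt_pos.2 hs.1
      have : ((fun h => (h, s)) ⁻¹' S) = ((Real.sqrt s)⁻¹ * ·) ⁻¹' (A ∩ Icc (-1) 1) := by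
        ext h
        simp only [S, mem_preimage, mem_ofPred_eq, hs, true_and, mem_inter_iff]
        rw [and_comm]
        apply and_congr_right
        intro _
        rw [mem_Icc, ← abs_le, abs_mul, abs_of_pos (inv_pos.2 hq), inv_mul_le_iff₀ hq, mul_one, Real.le_sqrt (abs_nonneg h), sq_abs]
        exact hs.1.le
      rw [this, Real.volume_preimage_mul_left (inv_pos.2 hq).ne', inv_inv, abs_of_pos hq]
    · rw [indicator_of_notMem hs]
      convert! measure_empty (μ := (volume : Measure ℝ))
      ext h; simp only [S, mem_preimage, mem_ofPred_eq, hs, false_and, mem_empty_iff_false]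
  simp_rw [step2]
  rw [lintegral_indicator measurableSet_Ioo, lintegral_mul_const _ (by fun_prop)]
  have step3 : ∫⁻ s in Ioo (0:ℝ) 1, ENNReal.ofReal (Real.sqrt s) = ENNReal.ofReal (2/3) := by
    rw [← ofReal_integral_eq_lintegral_ofReal]
    · rw [← integral_Ioc_eq_integral_Ioo, ← intervalIntegral.integral_of_le zero_le_one]
      simp_rw [Real.sqrt_eq_rpow]
      rw [integral_rpow (by norm_num)]
      norm_num
    · exact (Real.continuous_sqrt.integrableOn_Icc (a := 0) (b := 1)).mono_set Ioo_subset_Icc_self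
    · exact Filter.Eventually.of_forall fun s => Real.sqrt_nonneg s
  rw [step3, smul_eq_mul, smul_eq_mul, ← mul_assoc, ← mul_assoc, finrank_euclideanSpace_fin,
    ← ENNReal.ofReal_natCast, ← ENNReal.ofReal_mul (by positivity), ← ENNReal.ofReal_mul (by positivity)]
  congr 2
  push_cast; ring

theorem newton_sphere_average (r : ℝ) (hr : 0 < r) (y : EuclideanSpace ℝ (Fin 3)) :
    (1 / (4 * Real.pi)) *
      ∫ ν : Metric.sphere (0 : EuclideanSpace ℝ (Fin 3)) 1,
        ‖r • (↑ν : EuclideanSpace ℝ (Fin 3)) - y‖⁻¹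
        ∂((volume : Measure (EuclideanSpace ℝ (Fin 3))).toSphere) = 1 / max r ‖y‖ := by
  obtain ⟨e, he, hy⟩ : ∃ e : (EuclideanSpace ℝ (Fin 3)), ‖e‖ = 1 ∧ y = ‖y‖ • e := by
    by_cases h : y = 0
    · exact ⟨EuclideanSpace.single 0 1, by simp, by simp [h]⟩
    · have : ‖y‖ ≠ 0 := norm_ne_zero_iff.2 h
      exact ⟨‖y‖⁻¹ • y, by simp [norm_smul, this], by rw [smul_smul, mul_inv_cancel₀ this, one_smul]⟩
  set s := ‖y‖ with hs
  have hs0 : 0 ≤ s := norm_nonneg y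
  have h1 : ∀ ν : Metric.sphere (0 : EuclideanSpace ℝ (Fin 3)) 1, ‖r • (ν : EuclideanSpace ℝ (Fin 3)) - y‖⁻¹ =
      (fun t : ℝ => (Real.sqrt (r^2 + s^2 - 2*r*s*t))⁻¹) (inner ℝ e (ν : EuclideanSpace ℝ (Fin 3))) := by
    intro ν
    have hn : ‖(ν : EuclideanSpace ℝ (Fin 3))‖ = 1 := by simp
    simp only
    congr 1
    rw [← Real.sqrt_sq (norm_nonneg (r • (ν : EuclideanSpace ℝ (Fin 3)) - y)), norm_sub_sq_real, ← hs]
    nth_rewrite 1 [hy]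
    rw [inner_smul_left, inner_smul_right, norm_smul, hn, Real.norm_of_nonneg hr.le, real_inner_comm]
    congr 1
    simp only [conj_trivial]; ring
  simp_rw [h1]
  rw [← integral_map (f := fun t : ℝ => (Real.sqrt (r^2 + s^2 - 2*r*s*t))⁻¹)
    (φ := fun ν : Metric.sphere (0 : EuclideanSpace ℝ (Fin 3)) 1 => (inner ℝ e (ν : EuclideanSpace ℝ (Fin 3)) : ℝ)) (by fun_prop)
    (Measurable.aestronglyMeasurable (by fun_prop)), archimedes e he, integral_smul_measure,
    integral_Icc_eq_integral_Ioc, ← intervalIntegral.integral_of_le (by norm_num),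
    ENNReal.toReal_ofReal (by positivity), smul_eq_mul]
  have : ∫ t in (-1:ℝ)..1, (Real.sqrt (r^2 + s^2 - 2*r*s*t))⁻¹ = 2 / max r s := by
    rcases hs0.eq_or_lt with h | h
    · rw [← h, max_eq_left hr.le]
      simp [Real.sqrt_sq hr.le]
      field_simp; norm_num
    · exact integral_phi r s hr h
  rw [this]
  have := Real.pi_pos
  have : 0 < max r s := lt_max_of_lt_left hr
  field_simp; norm_num
end

section
/- (Hardy–Littlewood–Sobolev bound for the Coulomb energy.) There is a constant C > 0 such that for every measurable f : ℝ³ → ℝ, ∬_{ℝ³×ℝ³} |f(x)| |f(y)| |x − y|^{-1} dx dy ≤ C · ‖f‖_{L^{6/5}}². -/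
open MeasureTheory
open scoped ENNReal

lemma hls_radial (g : ℝ → ℝ) (hg : ∀ r, 0 ≤ g r)
    (hi : IntegrableOn (fun y : ℝ => y ^ 2 * g y) (Set.Ioi 0)) :
    ∫⁻ z : EuclideanSpace ℝ (Fin 3), ENNReal.ofReal (g ‖z‖) =
      ENNReal.ofReal (3 * (volume.real (Metric.ball (0 : EuclideanSpace ℝ (Fin 3)) 1) *
        ∫ y in Set.Ioi (0 : ℝ), y ^ 2 * g y)) := by
  have h1 : Integrable (fun z : EuclideanSpace ℝ (Fin 3) => g ‖z‖) volume := by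
    rw [integrable_fun_norm_addHaar]
    simpa using hi
  rw [← ofReal_integral_eq_lintegral_ofReal h1 (Filter.Eventually.of_forall fun z => hg _)]
  rw [integral_fun_norm_addHaar]
  simp

lemma hls_near (R : ℝ) (hR : 0 < R) :
    ∫⁻ z : EuclideanSpace ℝ (Fin 3),
      ENNReal.ofReal ((Set.Iio R).indicator (fun r : ℝ => |r|⁻¹) ‖z‖) =
      ENNReal.ofReal (3 * (volume.real (Metric.ball (0 : EuclideanSpace ℝ (Fin 3)) 1) *
        (R ^ 2 / 2))) := by
  have hE : Set.EqOn (fun y : ℝ => y ^ 2 * (Set.Iio R).indicator (fun r : ℝ => |r|⁻¹) y)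
      ((Set.Iio R).indicator (fun r : ℝ => r)) (Set.Ioi 0) := by
    intro y hy
    have hy : 0 < y := hy
    by_cases h : y < R
    · simp [h, abs_of_pos hy]; field_simp
    · simp [h]
  have hI : IntegrableOn (fun r : ℝ => r) (Set.Ioc 0 R) :=
    (continuous_id.integrableOn_Icc).mono_set Set.Ioc_subset_Icc_self
  have hI' : IntegrableOn (fun r : ℝ => r) (Set.Ioo 0 R) := hI.mono_set Set.Ioo_subset_Ioc_self
  rw [hls_radial ((Set.Iio R).indicator (fun r : ℝ => |r|⁻¹))
    (fun r => Set.indicator_nonneg (by intros; positivity) _)]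
  · rw [setIntegral_congr_fun measurableSet_Ioi hE, setIntegral_indicator measurableSet_Iio,
      Set.Ioi_inter_Iio, ← integral_Ioc_eq_integral_Ioo,
      ← intervalIntegral.integral_of_le hR.le, integral_id]
    simp
  · rw [integrableOn_congr_fun hE measurableSet_Ioi, IntegrableOn,
      integrable_indicator_iff measurableSet_Iio, IntegrableOn,
      Measure.restrict_restrict measurableSet_Iio, Set.inter_comm, Set.Ioi_inter_Iio]
    exact hI'

lemma hls_far (R : ℝ) (hR : 0 < R) :
    ∫⁻ z : EuclideanSpace ℝ (Fin 3),
      ENNReal.ofReal ((Set.Ici R).indicator (fun r : ℝ => |r|⁻¹) ‖z‖) ^ (6 : ℝ) =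
      ENNReal.ofReal (volume.real (Metric.ball (0 : EuclideanSpace ℝ (Fin 3)) 1) *
        R ^ (-3 : ℝ)) := by
  have h0 : ∀ z : EuclideanSpace ℝ (Fin 3),
      ENNReal.ofReal ((Set.Ici R).indicator (fun r : ℝ => |r|⁻¹) ‖z‖) ^ (6 : ℝ) =
      ENNReal.ofReal ((Set.Ici R).indicator (fun r : ℝ => |r| ^ (-6 : ℝ)) ‖z‖) := by
    intro z
    rw [ENNReal.ofReal_rpow_of_nonneg (Set.indicator_nonneg (by intros; positivity) _) (by norm_num)]
    congr 1
    by_cases h : R ≤ ‖z‖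
    · simp only [Set.mem_Ici, h, Set.indicator_of_mem]
      rw [Real.inv_rpow (abs_nonneg _), Real.rpow_neg (abs_nonneg _)]
    · simp [h]
  simp_rw [h0]
  have hE : Set.EqOn (fun y : ℝ => y ^ 2 * (Set.Ici R).indicator (fun r : ℝ => |r| ^ (-6 : ℝ)) y)
      ((Set.Ici R).indicator (fun r : ℝ => r ^ (-4 : ℝ))) (Set.Ioi 0) := by
    intro y hy
    have hy : 0 < y := hy
    by_cases h : R ≤ y
    · simp only [Set.mem_Ici, h, Set.indicator_of_mem, abs_of_pos hy]
      rw [← Real.rpow_natCast, ← Real.rpow_add hy]; norm_num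
    · simp [h]
  have hs : Set.Ioi 0 ∩ Set.Ici R = Set.Ici R := by
    apply Set.inter_eq_right.2
    intro x hx
    exact lt_of_lt_of_le hR hx
  rw [hls_radial ((Set.Ici R).indicator (fun r : ℝ => |r| ^ (-6 : ℝ)))
    (fun r => Set.indicator_nonneg (by intros; positivity) _)]
  · rw [setIntegral_congr_fun measurableSet_Ioi hE, setIntegral_indicator measurableSet_Ici,
      hs, integral_Ici_eq_integral_Ioi, integral_Ioi_rpow_of_lt (by norm_num) hR]
    congr 1
    rw [show (-4 : ℝ) + 1 = -3 by norm_num]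
    ring
  · rw [integrableOn_congr_fun hE measurableSet_Ioi, IntegrableOn,
      integrable_indicator_iff measurableSet_Ici, IntegrableOn,
      Measure.restrict_restrict measurableSet_Ici, Set.inter_comm, hs, ← IntegrableOn,
      integrableOn_Ici_iff_integrableOn_Ioi]
    exact integrableOn_Ioi_rpow_of_lt (by norm_num) hR

/-- The potential of the part of `h` below height `b`, estimated by splitting at radius `R`. -/
lemma hls_split (h : EuclideanSpace ℝ (Fin 3) → ℝ≥0∞) (hm : Measurable h) (b : ℝ≥0∞)
    (R : ℝ) (hR : 0 < R) (y : EuclideanSpace ℝ (Fin 3)) :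
    ∫⁻ x, {x | h x ≤ b}.indicator h x * (ENNReal.ofReal ‖x - y‖)⁻¹ ≤
      b * ENNReal.ofReal (3 * (volume.real (Metric.ball (0 : EuclideanSpace ℝ (Fin 3)) 1) *
        (R ^ 2 / 2))) +
      (∫⁻ x, h x ^ (6 / 5 : ℝ)) ^ (5 / 6 : ℝ) *
      ENNReal.ofReal (volume.real (Metric.ball (0 : EuclideanSpace ℝ (Fin 3)) 1) *
        R ^ (-3 : ℝ)) ^ (1 / 6 : ℝ) := by
  set g1 : EuclideanSpace ℝ (Fin 3) → ℝ≥0∞ := fun z =>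
    ENNReal.ofReal ((Set.Iio R).indicator (fun r : ℝ => |r|⁻¹) ‖z‖) with hg1
  set g2 : EuclideanSpace ℝ (Fin 3) → ℝ≥0∞ := fun z =>
    ENNReal.ofReal ((Set.Ici R).indicator (fun r : ℝ => |r|⁻¹) ‖z‖) with hg2
  have mabs : Measurable (fun r : ℝ => |r|⁻¹) := by fun_prop
  have m1 : Measurable g1 :=
    ((mabs.indicator measurableSet_Iio).comp measurable_norm).ennreal_ofReal
  have m2 : Measurable g2 :=
    ((mabs.indicator measurableSet_Ici).comp measurable_norm).ennreal_ofReal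
  have hne : ∀ᵐ x : EuclideanSpace ℝ (Fin 3), x ≠ y := by
    simp [ae_iff]
  calc _ ≤ ∫⁻ x, (b * g1 (x - y) + h x * g2 (x - y)) := by
        apply lintegral_mono_ae
        filter_upwards [hne] with x hx
        have hpos : 0 < ‖x - y‖ := norm_pos_iff.2 (sub_ne_zero.2 hx)
        rw [← ENNReal.ofReal_inv_of_pos hpos]
        by_cases hxb : h x ≤ b
        · rw [Set.indicator_of_mem (by exact hxb)]
          by_cases hr : ‖x - y‖ < R
          · have : g1 (x - y) = ENNReal.ofReal ‖x - y‖⁻¹ := by simp [hg1, hr]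
            rw [this]
            exact le_trans (mul_le_mul_left hxb _) le_self_add
          · have : g2 (x - y) = ENNReal.ofReal ‖x - y‖⁻¹ := by simp [hg2, not_lt.1 hr]
            rw [this]
            exact le_add_self
        · rw [Set.indicator_of_notMem (by exact hxb)]
          simp
    _ = b * (∫⁻ x, g1 (x - y)) + ∫⁻ x, h x * g2 (x - y) := by
        rw [lintegral_add_left (by fun_prop), lintegral_const_mul _ (by fun_prop)]
    _ ≤ _ := by
        gcongr
        · rw [lintegral_sub_right_eq_self g1 y, hls_near R hR]
        · have := ENNReal.lintegral_mul_le_Lp_mul_Lq volume (p := 6/5) (q := 6)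
            (by rw [Real.holderConjugate_iff]; norm_num) hm.aemeasurable
            (g := fun x => g2 (x - y)) (by fun_prop)
          refine this.trans ?_
          rw [lintegral_sub_right_eq_self (fun x => g2 x ^ (6 : ℝ)) y, hls_far R hR]
          norm_num

lemma hls_opt : ∃ C : ℝ, 0 < C ∧ ∀ h : EuclideanSpace ℝ (Fin 3) → ℝ≥0∞, Measurable h →
    ∀ b : ℝ≥0∞, b ≠ 0 → b ≠ ∞ → (∫⁻ x, h x ^ (6 / 5 : ℝ)) ≠ 0 → (∫⁻ x, h x ^ (6 / 5 : ℝ)) ≠ ∞ →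
    ∀ y : EuclideanSpace ℝ (Fin 3),
    ∫⁻ x, {x | h x ≤ b}.indicator h x * (ENNReal.ofReal ‖x - y‖)⁻¹ ≤
      ENNReal.ofReal C * b ^ (1 / 5 : ℝ) * (∫⁻ x, h x ^ (6 / 5 : ℝ)) ^ (2 / 3 : ℝ) := by
  set V := volume.real (Metric.ball (0 : EuclideanSpace ℝ (Fin 3)) 1) with hV
  have hV0 : 0 ≤ V := measureReal_nonneg
  refine ⟨3 * V / 2 + V ^ (1 / 6 : ℝ) + 1, by positivity, ?_⟩
  intro h hm b hb0 hbt hN0 hNt y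
  set N := ∫⁻ x, h x ^ (6 / 5 : ℝ) with hN
  lift b to NNReal using hbt
  have hbp : (0 : ℝ) < b := by
    have : b ≠ 0 := by simpa using hb0
    positivity
  set n : ℝ := N.toReal with hn
  have hnp : 0 < n := ENNReal.toReal_pos hN0 hNt
  have hNn : N = ENNReal.ofReal n := (ENNReal.ofReal_toReal hNt).symm
  have hbb : (b : ℝ≥0∞) = ENNReal.ofReal (b : ℝ) := by simp
  set β : ℝ := (b : ℝ) with hβ
  have hsp := hls_split h hm b (n ^ (1 / 3 : ℝ) * β ^ (-2 / 5 : ℝ)) (by positivity) y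
  refine hsp.trans ?_
  rw [← hN, ← hV, hNn, hbb]
  rw [ENNReal.ofReal_rpow_of_pos hnp, ENNReal.ofReal_rpow_of_pos hnp,
    ENNReal.ofReal_rpow_of_pos hbp, ENNReal.ofReal_rpow_of_nonneg (by positivity) (by norm_num),
    ← ENNReal.ofReal_mul (by positivity), ← ENNReal.ofReal_mul (by positivity),
    ← ENNReal.ofReal_mul (by positivity), ← ENNReal.ofReal_mul (by positivity),
    ← ENNReal.ofReal_add (by positivity) (by positivity)]
  apply ENNReal.ofReal_le_ofReal
  have e1 : β * (n ^ (1 / 3 : ℝ) * β ^ (-2 / 5 : ℝ)) ^ 2 = β ^ (1 / 5 : ℝ) * n ^ (2 / 3 : ℝ) := by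
    rw [mul_pow, ← Real.rpow_natCast, ← Real.rpow_natCast, ← Real.rpow_mul hnp.le,
      ← Real.rpow_mul hbp.le]
    have : β ^ (1 / 5 : ℝ) = β * β ^ (-2 / 5 * ((2 : ℕ) : ℝ) : ℝ) := by
      nth_rw 2 [← Real.rpow_one β]
      rw [← Real.rpow_add hbp]; norm_num
    rw [this]
    norm_num
    ring
  have e2 : n ^ (5 / 6 : ℝ) * (V * (n ^ (1 / 3 : ℝ) * β ^ (-2 / 5 : ℝ)) ^ (-3 : ℝ)) ^ (1 / 6 : ℝ)
      = V ^ (1 / 6 : ℝ) * (β ^ (1 / 5 : ℝ) * n ^ (2 / 3 : ℝ)) := by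
    rw [Real.mul_rpow hV0 (by positivity), ← Real.rpow_mul (by positivity),
      Real.mul_rpow (by positivity) (by positivity), ← Real.rpow_mul hnp.le,
      ← Real.rpow_mul hbp.le]
    have : n ^ (2 / 3 : ℝ) = n ^ (5 / 6 : ℝ) * n ^ (1 / 3 * (-3 * (1 / 6)) : ℝ) := by
      rw [← Real.rpow_add hnp]; norm_num
    rw [this]
    norm_num
    ring
  rw [e2]
  have hp : 0 ≤ β ^ (1 / 5 : ℝ) * n ^ (2 / 3 : ℝ) := by positivity
  have e3 : β * (3 * (V * ((n ^ (1 / 3 : ℝ) * β ^ (-2 / 5 : ℝ)) ^ 2 / 2))) =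
      3 * V / 2 * (β ^ (1 / 5 : ℝ) * n ^ (2 / 3 : ℝ)) := by
    rw [← e1]; ring
  rw [e3]
  linarith

/-- **Hardy–Littlewood–Sobolev bound for the Coulomb energy.**
There is a constant `C > 0` such that for every measurable `f : ℝ³ → ℝ`,
`∬ |f(x)| |f(y)| |x − y|⁻¹ dx dy ≤ C ‖f‖_{6/5}²` (both sides possibly infinite). -/
theorem hls_coulomb_bound :
    ∃ C : ℝ, 0 < C ∧ ∀ f : EuclideanSpace ℝ (Fin 3) → ℝ, Measurable f →
      ∫⁻ p : EuclideanSpace ℝ (Fin 3) × EuclideanSpace ℝ (Fin 3),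
          ENNReal.ofReal (|f p.1| * |f p.2|) * (ENNReal.ofReal ‖p.1 - p.2‖)⁻¹ ≤
        ENNReal.ofReal C * eLpNorm f (6 / 5) volume ^ 2 := by
  obtain ⟨C, hC, hopt⟩ := hls_opt
  refine ⟨2 * C, by positivity, ?_⟩
  intro f hf
  set h : EuclideanSpace ℝ (Fin 3) → ℝ≥0∞ := fun x => ENNReal.ofReal |f x| with hh
  have hm : Measurable h := by fun_prop
  have htr : ((6 / 5 : ℝ≥0∞)).toReal = 6 / 5 := by simp
  have hnorm : eLpNorm f (6 / 5) volume = (∫⁻ x, h x ^ (6 / 5 : ℝ)) ^ (5 / 6 : ℝ) := by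
    rw [eLpNorm_eq_lintegral_rpow_enorm_toReal (by simp) (by finiteness), htr]
    simp only [hh, ← Real.enorm_eq_ofReal_abs]
    norm_num
  set N := ∫⁻ x, h x ^ (6 / 5 : ℝ) with hN
  have hnorm2 : eLpNorm f (6 / 5) volume ^ 2 = N ^ (5 / 3 : ℝ) := by
    rw [hnorm, ← ENNReal.rpow_natCast, ← ENNReal.rpow_mul]; norm_num
  rw [hnorm2]
  by_cases hNt : N = ∞
  · rw [hNt, ENNReal.top_rpow_of_pos (by norm_num), ENNReal.mul_top]
    · exact le_top
    · simp [hC]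
  set G : EuclideanSpace ℝ (Fin 3) × EuclideanSpace ℝ (Fin 3) → ℝ≥0∞ := fun p =>
    h p.2 * ({q : EuclideanSpace ℝ (Fin 3) × EuclideanSpace ℝ (Fin 3) | h q.1 ≤ h q.2}.indicator
      (fun q => h q.1) p * (ENNReal.ofReal ‖p.1 - p.2‖)⁻¹) with hG
  have hGm : Measurable G := by
    have : MeasurableSet {q : EuclideanSpace ℝ (Fin 3) × EuclideanSpace ℝ (Fin 3) |
        h q.1 ≤ h q.2} := measurableSet_le (by fun_prop) (by fun_prop)
    have h2 := (hm.comp measurable_fst : Measurable (fun q :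
      EuclideanSpace ℝ (Fin 3) × EuclideanSpace ℝ (Fin 3) => h q.1)).indicator this
    fun_prop
  have hGint : ∫⁻ p, G p ≤ ENNReal.ofReal C * N ^ (5 / 3 : ℝ) := by
    rw [Measure.volume_eq_prod, lintegral_prod_symm' _ hGm]
    by_cases hN0 : N = 0
    · have hz : ∀ᵐ y, h y = 0 := by
        have := (lintegral_eq_zero_iff (by fun_prop)).1 hN0
        filter_upwards [this] with y hy
        exact (ENNReal.rpow_eq_zero_iff_of_pos (by norm_num)).1 hy
      have : ∫⁻ y, ∫⁻ x, G (x, y) = 0 := by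
        rw [lintegral_eq_zero_iff hGm.lintegral_prod_left']
        filter_upwards [hz] with y hy
        simp [hG, hy]
      rw [this]; simp
    calc _ ≤ ∫⁻ y, (ENNReal.ofReal C * N ^ (2 / 3 : ℝ)) * h y ^ (6 / 5 : ℝ) := by
          apply lintegral_mono
          intro y
          by_cases hy : h y = 0
          · simp [hG, hy]
          have hyt : h y ≠ ∞ := ENNReal.ofReal_ne_top
          have hmm : Measurable (fun x => {x | h x ≤ h y}.indicator h x *
              (ENNReal.ofReal ‖x - y‖)⁻¹) := by
            have := hm.indicator (measurableSet_le hm (measurable_const (a := h y)))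
            fun_prop
          have := hopt h hm (h y) hy hyt hN0 hNt y
          calc ∫⁻ x, G (x, y) = h y * ∫⁻ x, {x | h x ≤ h y}.indicator h x *
              (ENNReal.ofReal ‖x - y‖)⁻¹ := by
                rw [← lintegral_const_mul _ hmm]
                rfl
            _ ≤ h y * (ENNReal.ofReal C * h y ^ (1 / 5 : ℝ) * N ^ (2 / 3 : ℝ)) := by gcongr
            _ = _ := by
                have e : h y ^ (6 / 5 : ℝ) = h y * h y ^ (1 / 5 : ℝ) := by
                  nth_rw 2 [← ENNReal.rpow_one (h y)]
                  rw [← ENNReal.rpow_add _ _ hy hyt]; norm_num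
                beta_reduce
                rw [e]; ring
      _ = _ := by
          rw [lintegral_const_mul _ (by fun_prop), ← hN, mul_assoc]
          congr 1
          nth_rw 2 [← ENNReal.rpow_one N]
          rw [← ENNReal.rpow_add _ _ hN0 hNt]; norm_num
  calc _ ≤ ∫⁻ p, (G p + G p.swap) := by
        apply lintegral_mono
        intro p
        simp only [hG, Prod.fst_swap, Prod.snd_swap]
        rw [ENNReal.ofReal_mul (abs_nonneg _)]
        rcases le_total (h p.1) (h p.2) with hle | hle
        · refine le_trans (le_of_eq ?_) le_self_add
          rw [Set.indicator_of_mem (by exact hle)]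
          simp only [hh]; ring
        · refine le_trans (le_of_eq ?_) le_add_self
          rw [Set.indicator_of_mem (by exact hle), norm_sub_rev]
          simp only [hh, Prod.fst_swap]; ring
    _ = 2 * ∫⁻ p, G p := by
        rw [lintegral_add_left hGm, Measure.volume_eq_prod, lintegral_prod_swap, two_mul]
    _ ≤ 2 * (ENNReal.ofReal C * N ^ (5 / 3 : ℝ)) := by gcongr
    _ = _ := by
        rw [ENNReal.ofReal_mul (by norm_num), ← mul_assoc]; simp
end
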